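/- arXiv:1006.4888 — 2 statements merged into one kernel-verified Lean document; each statement's English description precedes it below -/
import Mathlib

section
/- Let D be a positive integer and let A, B, ψ be D×D complex matrices, where ψ is diagonal with nonnegative real diagonal entries d_0 ≤ d_1 ≤ … ≤ d_{D−1} in increasing order. For an integer n with 0 ≤ n ≤ D, let ψ_n be the diagonal matrix whose j-th diagonal entry equals d_j for j < n and equals 0 for j ≥ n. Then χ_n((AψB)(AψB)†) ≤ tr((Aψ_nB)(Aψ_nB)†), where the trace on the right is a nonnegative real number. -/
open Matrix

/-- `chi hM n` is the sum of the `n` smallest eigenvalues of the Hermitian matrix `M`,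
i.e. the minimum over all `n`-element subsets `s` of the index set of the sum of the
eigenvalues of `M` over `s`. -/
noncomputable def chi {D : ℕ} {M : Matrix (Fin D) (Fin D) ℂ} (hM : M.IsHermitian)
    (n : ℕ) : ℝ :=
  sInf {x : ℝ | ∃ s : Finset (Fin D), s.card = n ∧ x = ∑ i ∈ s, hM.eigenvalues i}

/-!
An `n`-element sum of eigenvalues is a sum weighted by an indicator function, and the smallest one
is minimal among all sums with weights in `[0, 1]` of total mass `n`. For an orthonormal
family `w₁, …, wₙ` and a Hermitian `M`, the number `∑ ⟪wᵢ, M wᵢ⟫` is such a weighted sum of the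
eigenvalues, the weights being bounded by Bessel's inequality, so it lies between `chi` and, for
positive semidefinite `M`, the trace.

If `M - N` has rank at most `D - n`, then `Mᴴ` and `Nᴴ` agree on an `n`-dimensional space. For an
orthonormal family spanning it, the sums belonging to `M * Mᴴ` and to `N * Nᴴ` coincide, whence
`chi (M * Mᴴ) n ≤ tr (N * Nᴴ)`. Removing `D - n` diagonal entries of `ψ` changes `A * ψ * B` by
such a matrix of small rank.
-/

open scoped InnerProductSpace

section WeightedSums

variable {ι R : Type*} [Fintype ι]

theorem exists_card_eq_forall_le_forall_ge [LinearOrder R] [Nonempty R] (f : ι → R) {n : ℕ}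
    (hn : n ≤ Fintype.card ι) :
    ∃ s : Finset ι, s.card = n ∧ ∃ c, (∀ i ∈ s, f i ≤ c) ∧ ∀ i ∉ s, c ≤ f i := by
  classical
  induction n with
  | zero =>
    obtain ⟨c, hc⟩ := Finite.bddBelow_range f
    exact ⟨∅, rfl, c, by simp, fun i _ ↦ hc (Set.mem_range_self i)⟩
  | succ n ih =>
    obtain ⟨s, rfl, c, hle, hge⟩ := ih (by omega)
    have hne : sᶜ.Nonempty := by
      rw [← Finset.card_pos, Finset.card_compl]
      omega
    obtain ⟨k, hk, hmin⟩ := sᶜ.exists_min_image f hne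
    rw [Finset.mem_compl] at hk
    refine ⟨insert k s, Finset.card_insert_of_notMem hk, f k, ?_, ?_⟩
    · rw [Finset.forall_mem_insert]
      exact ⟨le_rfl, fun i hi ↦ (hle i hi).trans (hge k hk)⟩
    · intro i hi
      rw [Finset.mem_insert, not_or] at hi
      exact hmin i (Finset.mem_compl.mpr hi.2)

theorem sum_le_sum_mul_of_forall_le_of_forall_ge [CommRing R] [LinearOrder R]
    [IsStrictOrderedRing R] {f p : ι → R} {s : Finset ι} {c : R} (hle : ∀ i ∈ s, f i ≤ c)
    (hge : ∀ i ∉ s, c ≤ f i) (hp0 : ∀ i, 0 ≤ p i) (hp1 : ∀ i, p i ≤ 1)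
    (hp : ∑ i, p i = s.card) : ∑ i ∈ s, f i ≤ ∑ i, p i * f i := by
  classical
  have hterm (i : ι) : 0 ≤ (p i - if i ∈ s then 1 else 0) * (f i - c) := by
    split_ifs with hi
    · exact mul_nonneg_of_nonpos_of_nonpos (by linarith [hp1 i]) (by linarith [hle i hi])
    · exact mul_nonneg (by linarith [hp0 i]) (by linarith [hge i hi])
  have hsum : ∑ i, (p i - if i ∈ s then 1 else 0) * (f i - c) =
      ∑ i, p i * f i - ∑ i ∈ s, f i := by
    simp [mul_sub, sub_mul, Finset.sum_sub_distrib, ← Finset.sum_mul, hp]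
  exact sub_nonneg.mp (hsum ▸ Finset.sum_nonneg fun i _ ↦ hterm i)

end WeightedSums

section QuadraticForms

variable {𝕜 ι κ : Type*} [RCLike 𝕜] [Fintype ι] [DecidableEq ι]

theorem re_inner_toEuclideanLin_self_eq_sum {M : Matrix ι ι 𝕜} (hM : M.IsHermitian)
    (x : EuclideanSpace 𝕜 ι) :
    RCLike.re ⟪x, toEuclideanLin M x⟫_𝕜 =
      ∑ j, ‖⟪hM.eigenvectorBasis j, x⟫_𝕜‖ ^ 2 * hM.eigenvalues j := by
  have hinner (j : ι) : ⟪hM.eigenvectorBasis j, toEuclideanLin M x⟫_𝕜 =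
      hM.eigenvalues j * ⟪hM.eigenvectorBasis j, x⟫_𝕜 := by
    have heigen : toEuclideanLin M (hM.eigenvectorBasis j) =
        (hM.eigenvalues j : 𝕜) • hM.eigenvectorBasis j := by
      ext i
      simpa [RCLike.real_smul_eq_coe_mul] using congrFun (hM.mulVec_eigenvectorBasis j) i
    rw [← isSymmetric_toEuclideanLin_iff.mpr hM, heigen, inner_smul_left, RCLike.conj_ofReal]
  rw [← hM.eigenvectorBasis.sum_inner_mul_inner, map_sum]
  refine Finset.sum_congr rfl fun j _ ↦ ?_
  rw [hinner, mul_left_comm, RCLike.re_ofReal_mul, inner_mul_symm_re_eq_norm, norm_mul,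
    norm_inner_symm, ← sq, mul_comm]

theorem sum_re_inner_toEuclideanLin_self_eq_sum [Fintype κ] {M : Matrix ι ι 𝕜}
    (hM : M.IsHermitian) (w : κ → EuclideanSpace 𝕜 ι) :
    ∑ i, RCLike.re ⟪w i, toEuclideanLin M (w i)⟫_𝕜 =
      ∑ j, (∑ i, ‖⟪hM.eigenvectorBasis j, w i⟫_𝕜‖ ^ 2) * hM.eigenvalues j := by
  simp_rw [re_inner_toEuclideanLin_self_eq_sum hM, Finset.sum_mul]
  exact Finset.sum_comm

theorem sum_norm_inner_sq_le_one [Fintype κ] {E : Type*} [NormedAddCommGroup E]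
    [InnerProductSpace 𝕜 E] {w : κ → E} (hw : Orthonormal 𝕜 w) {v : E} (hv : ‖v‖ = 1) :
    ∑ i, ‖⟪v, w i⟫_𝕜‖ ^ 2 ≤ 1 := by
  simpa [norm_inner_symm, hv] using hw.sum_inner_products_le v (s := Finset.univ)

open scoped ComplexOrder in
theorem sum_re_inner_toEuclideanLin_self_le_re_trace [Fintype κ] {M : Matrix ι ι 𝕜}
    (hM : M.PosSemidef) {w : κ → EuclideanSpace 𝕜 ι} (hw : Orthonormal 𝕜 w) :
    ∑ i, RCLike.re ⟪w i, toEuclideanLin M (w i)⟫_𝕜 ≤ RCLike.re M.trace := by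
  rw [sum_re_inner_toEuclideanLin_self_eq_sum hM.isHermitian,
    hM.isHermitian.trace_eq_sum_eigenvalues, map_sum]
  refine Finset.sum_le_sum fun j _ ↦ ?_
  rw [RCLike.ofReal_re]
  exact mul_le_of_le_one_left (hM.eigenvalues_nonneg j)
    (sum_norm_inner_sq_le_one hw (hM.isHermitian.eigenvectorBasis.norm_eq_one j))

theorem inner_toEuclideanLin_mul_conjTranspose_self [Fintype κ] (M : Matrix ι κ 𝕜)
    (x : EuclideanSpace 𝕜 ι) :
    ⟪x, toEuclideanLin (M * Mᴴ) x⟫_𝕜 = ⟪toEuclideanLin Mᴴ x, toEuclideanLin Mᴴ x⟫_𝕜 := by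
  classical
  rw [toLpLin_mul_same, LinearMap.comp_apply, toEuclideanLin_conjTranspose_eq_adjoint,
    LinearMap.adjoint_inner_left]

end QuadraticForms

section Rank

variable {ι κ : Type*} [Fintype ι] [DecidableEq ι]

theorem exists_orthonormal_toEuclideanLin_eq_zero {𝕜 : Type*} [RCLike 𝕜] [Finite κ] {n : ℕ}
    (R : Matrix κ ι 𝕜) (hR : R.rank + n ≤ Fintype.card ι) :
    ∃ w : Fin n → EuclideanSpace 𝕜 ι, Orthonormal 𝕜 w ∧ ∀ i, toEuclideanLin R (w i) = 0 := by
  classical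
  have := Fintype.ofFinite κ
  let K := (toEuclideanLin R).ker
  have hrank : R.rank = Module.finrank 𝕜 (toEuclideanLin R).range := by
    rw [toEuclideanLin, toLpLin_eq_toLin]
    exact R.rank_eq_finrank_range_toLin _ _
  have hle : n ≤ Module.finrank 𝕜 K := by
    have hsum : Module.finrank 𝕜 (toEuclideanLin R).range + Module.finrank 𝕜 K =
        Fintype.card ι := by
      rw [(toEuclideanLin R).finrank_range_add_finrank_ker, finrank_euclideanSpace]
    omega
  have hw := (stdOrthonormalBasis 𝕜 K).orthonormal.comp_linearIsometry K.subtypeₗᵢ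
  exact ⟨_, hw.comp _ (Fin.castLE_injective hle), fun i ↦ (stdOrthonormalBasis 𝕜 K _).2⟩

theorem rank_mul_diagonal_mul_sub_ite_le {K γ : Type*} [Field K] [Finite κ] [Fintype γ]
    (A : Matrix κ ι K) (B : Matrix ι γ K) (d : ι → K) (s : Finset ι) :
    (A * diagonal d * B - A * diagonal (fun j ↦ if j ∈ s then d j else 0) * B).rank ≤
      sᶜ.card := by
  classical
  rw [← Matrix.sub_mul, ← Matrix.mul_sub, diagonal_sub]
  refine (rank_mul_le_left _ _).trans ((rank_mul_le_right _ _).trans ?_)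
  rw [rank_diagonal, Fintype.card_subtype]
  exact Finset.card_le_card fun j ↦ by simp +contextual [imp_not_comm]

end Rank

section Chi

variable {D n : ℕ}

theorem chi_le_sum_eigenvalues {M : Matrix (Fin D) (Fin D) ℂ} (hM : M.IsHermitian)
    (s : Finset (Fin D)) : chi hM s.card ≤ ∑ i ∈ s, hM.eigenvalues i := by
  refine csInf_le (Set.Finite.bddBelow ?_) ⟨s, rfl, rfl⟩
  refine (Set.finite_range fun t : Finset (Fin D) ↦ ∑ i ∈ t, hM.eigenvalues i).subset ?_
  rintro x ⟨t, -, rfl⟩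
  exact Set.mem_range_self t

theorem chi_le_sum_mul_eigenvalues {M : Matrix (Fin D) (Fin D) ℂ} (hM : M.IsHermitian)
    {p : Fin D → ℝ} (hp0 : ∀ j, 0 ≤ p j) (hp1 : ∀ j, p j ≤ 1) (hp : ∑ j, p j = n) :
    chi hM n ≤ ∑ j, p j * hM.eigenvalues j := by
  have hn : n ≤ Fintype.card (Fin D) := by
    have hsum : ∑ j, p j ≤ ∑ _j : Fin D, 1 := Finset.sum_le_sum fun j _ ↦ hp1 j
    rw [hp] at hsum
    simpa using hsum
  obtain ⟨s, rfl, c, hle, hge⟩ := exists_card_eq_forall_le_forall_ge hM.eigenvalues hn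
  exact (chi_le_sum_eigenvalues hM s).trans
    (sum_le_sum_mul_of_forall_le_of_forall_ge hle hge hp0 hp1 hp)

/-- One half of Ky Fan's minimum principle. -/
theorem chi_le_sum_re_inner {κ : Type*} [Fintype κ] {M : Matrix (Fin D) (Fin D) ℂ}
    (hM : M.IsHermitian) {w : κ → EuclideanSpace ℂ (Fin D)} (hw : Orthonormal ℂ w) :
    chi hM (Fintype.card κ) ≤ ∑ i, RCLike.re ⟪w i, toEuclideanLin M (w i)⟫_ℂ := by
  rw [sum_re_inner_toEuclideanLin_self_eq_sum hM]
  refine chi_le_sum_mul_eigenvalues hM (fun j ↦ by positivity)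
    (fun j ↦ sum_norm_inner_sq_le_one hw (hM.eigenvectorBasis.norm_eq_one j)) ?_
  rw [Finset.sum_comm]
  simp [OrthonormalBasis.sum_sq_norm_inner_right, hw.norm_eq_one]

open scoped ComplexOrder in
/-- The Eckart–Young lower bound for the Frobenius norm of `N`, the error of approximating `M` by
the matrix `M - N` of low rank. -/
theorem chi_le_re_trace_of_rank_sub_add_le {κ : Type*} [Fintype κ] (M N : Matrix (Fin D) κ ℂ)
    (h : (M - N).rank + n ≤ D) :
    chi (isHermitian_mul_conjTranspose_self M) n ≤ (N * Nᴴ).trace.re := by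
  classical
  obtain ⟨w, hw, hker⟩ := exists_orthonormal_toEuclideanLin_eq_zero (n := n) (M - N)ᴴ
    (by rwa [rank_conjTranspose, Fintype.card_fin])
  have hagree (i : Fin n) : toEuclideanLin Mᴴ (w i) = toEuclideanLin Nᴴ (w i) := by
    rw [← sub_eq_zero, ← LinearMap.sub_apply, ← map_sub, ← conjTranspose_sub, hker i]
  calc chi (isHermitian_mul_conjTranspose_self M) n
      ≤ ∑ i, RCLike.re ⟪w i, toEuclideanLin (M * Mᴴ) (w i)⟫_ℂ := by
        simpa using chi_le_sum_re_inner (isHermitian_mul_conjTranspose_self M) hw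
    _ = ∑ i, RCLike.re ⟪w i, toEuclideanLin (N * Nᴴ) (w i)⟫_ℂ := by
        simp only [inner_toEuclideanLin_mul_conjTranspose_self, hagree]
    _ ≤ (N * Nᴴ).trace.re :=
        sum_re_inner_toEuclideanLin_self_le_re_trace (posSemidef_self_mul_conjTranspose N) hw

open scoped ComplexOrder in
theorem chi_le_trace_truncated_general {ι κ : Type*} [Fintype ι] [DecidableEq ι] [Fintype κ]
    (A : Matrix (Fin D) ι ℂ) (B : Matrix ι κ ℂ) (d : ι → ℂ) (s : Finset ι)
    (hs : sᶜ.card + n ≤ D) :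
    ((A * diagonal (fun j ↦ if j ∈ s then d j else 0) * B) *
        (A * diagonal (fun j ↦ if j ∈ s then d j else 0) * B)ᴴ).trace.im = 0 ∧
    0 ≤ ((A * diagonal (fun j ↦ if j ∈ s then d j else 0) * B) *
        (A * diagonal (fun j ↦ if j ∈ s then d j else 0) * B)ᴴ).trace.re ∧
    chi (isHermitian_mul_conjTranspose_self (A * diagonal d * B)) n ≤
      ((A * diagonal (fun j ↦ if j ∈ s then d j else 0) * B) *
        (A * diagonal (fun j ↦ if j ∈ s then d j else 0) * B)ᴴ).trace.re := by
  set N := A * diagonal (fun j ↦ if j ∈ s then d j else 0) * B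
  have htrace : 0 ≤ (N * Nᴴ).trace := (posSemidef_self_mul_conjTranspose N).trace_nonneg
  have hrank : (A * diagonal d * B - N).rank ≤ sᶜ.card :=
    rank_mul_diagonal_mul_sub_ite_le A B d s
  exact ⟨(Complex.nonneg_iff.mp htrace).2.symm, (Complex.nonneg_iff.mp htrace).1,
    chi_le_re_trace_of_rank_sub_add_le _ N (by omega)⟩

end Chi

/-- Lemma: if `ψ` is diagonal with nonnegative increasing entries `d_j` and `ψ_n`
retains only the `n` smallest entries, then the sum of the `n` smallest eigenvalues of
`(AψB)(AψB)†` is at most the trace of `(Aψ_nB)(Aψ_nB)†`, a nonnegative real number. -/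
theorem chi_le_trace_truncated (D : ℕ) (hD : 0 < D)
    (A B : Matrix (Fin D) (Fin D) ℂ)
    (d : Fin D → ℝ) (hd : ∀ j, 0 ≤ d j) (hmono : Monotone d)
    (n : ℕ) (hn : n ≤ D) :
    ((A * Matrix.diagonal (fun j : Fin D => if (j : ℕ) < n then (d j : ℂ) else 0) * B) *
        (A * Matrix.diagonal (fun j : Fin D => if (j : ℕ) < n then (d j : ℂ) else 0) * B)ᴴ).trace.im
        = 0 ∧
    0 ≤ ((A * Matrix.diagonal (fun j : Fin D => if (j : ℕ) < n then (d j : ℂ) else 0) * B) *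
        (A * Matrix.diagonal (fun j : Fin D => if (j : ℕ) < n then (d j : ℂ) else 0) * B)ᴴ).trace.re ∧
    chi (Matrix.isHermitian_mul_conjTranspose_self
        (A * Matrix.diagonal (fun j : Fin D => (d j : ℂ)) * B)) n ≤
      ((A * Matrix.diagonal (fun j : Fin D => if (j : ℕ) < n then (d j : ℂ) else 0) * B) *
        (A * Matrix.diagonal (fun j : Fin D => if (j : ℕ) < n then (d j : ℂ) else 0) * B)ᴴ).trace.re := by
  simpa using chi_le_trace_truncated_general A B (fun j ↦ (d j : ℂ)) {j | (j : ℕ) < n}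
    (by rw [Finset.card_compl, Fintype.card_fin, Fin.card_filter_val_lt]; omega)
end

section
/- For every odd positive integer D and every natural number k, ∑_{j=0}^{D−1} exp(2πi·(j² + kj)/D) = √D · exp(πi/4) · exp(−πi·k²/(2D)) · (1 − i^{2k+D})/√2. -/
/-!
Near a rational cusp the theta function is a Gaussian mean of a periodic function. For `T > 0`, the
sum over `n ∈ ℤ` of `exp(πi(an² + bn)/c) exp(-πn²/(c²T))`, divided by `√T`, tends as `T → ∞` to the
sum of the first factor over one period modulo `c`, because asymptotically all residue classes carry
the same Gaussian mass. Poisson summation rewrites it as a Gaussian mean of `exp(πi(-cn² + bn)/a)`,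
a function of period `a`. Equating the two limits gives the reciprocity between the Gauss sums with
moduli `c` and `a`; for `a = 2` the dual sum has only two terms.
-/

open Complex Filter Function Topology
open scoped Real

lemma tendsto_jacobiTheta₂_comap_im_atTop (z : ℂ) :
    Tendsto (jacobiTheta₂ z) (comap im atTop) (𝓝 1) := by
  rw [← tsum_ite_eq (0 : ℤ) fun _ ↦ (1 : ℂ)]
  refine tendsto_tsum_of_dominated_convergence (bound := fun n ↦ ‖jacobiTheta₂_term n z I‖)
    ((summable_jacobiTheta₂_term_iff z I).mpr (by simp)).norm (fun n ↦ ?_) ?_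
  · split_ifs with hn
    · simpa [jacobiTheta₂_term, hn] using tendsto_const_nhds
    · rw [tendsto_zero_iff_norm_tendsto_zero]
      simp_rw [norm_jacobiTheta₂_term, sub_eq_add_neg]
      have hneg : -π * (n : ℝ) ^ 2 < 0 := by
        rw [neg_mul, neg_lt_zero]
        positivity
      exact Real.tendsto_exp_atBot.comp <|
        tendsto_atBot_add_const_right _ _ (tendsto_comap.const_mul_atTop_of_neg hneg)
  · filter_upwards [tendsto_comap.eventually_ge_atTop 1] with τ hτ n
    rw [norm_jacobiTheta₂_term, norm_jacobiTheta₂_term, Real.exp_le_exp, I_im, neg_mul]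
    have : 0 ≤ π * (n : ℝ) ^ 2 := by positivity
    nlinarith

lemma summable_exp_shifted_gaussian {w : ℂ} (hw : 0 < w.re) (x : ℂ) :
    Summable fun n : ℤ ↦ cexp (-π / w * (n + x) ^ 2) := by
  have him : 0 < (I / w).im := by
    rw [div_eq_mul_inv, I_mul_im, inv_re]
    exact div_pos hw (normSq_pos.mpr fun h ↦ by simp [h] at hw)
  refine (((summable_jacobiTheta₂_term_iff (I * x / w) (I / w)).mpr him).mul_left
    (cexp (-π / w * x ^ 2))).congr fun n ↦ ?_
  rw [jacobiTheta₂_term, ← Complex.exp_add]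
  congr 1
  linear_combination (2 * π * n * x + π * n ^ 2) / w * I_sq

lemma tsum_exp_shifted_gaussian {w : ℂ} (hw : 0 < w.re) (x : ℂ) :
    1 / w ^ (1 / 2 : ℂ) * ∑' n : ℤ, cexp (-π / w * (n + x) ^ 2) =
      jacobiTheta₂ (-x) (I * w) := by
  have hx : I * (-I * x) = x := by linear_combination -x * I_sq
  have poisson := Complex.tsum_exp_neg_quadratic hw (-I * x)
  rw [hx] at poisson
  rw [← poisson, jacobiTheta₂]
  refine tsum_congr fun n ↦ congrArg cexp ?_
  linear_combination -π * n ^ 2 * w * I_sq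

lemma tendsto_tsum_exp_shifted_gaussian (x : ℂ) :
    Tendsto (fun w ↦ 1 / w ^ (1 / 2 : ℂ) * ∑' n : ℤ, cexp (-π / w * (n + x) ^ 2))
      (comap re atTop) (𝓝 1) := by
  have hrot : Tendsto (I * ·) (comap re atTop) (comap im atTop) := by
    simpa [tendsto_comap_iff, comp_def] using tendsto_comap
  refine ((tendsto_jacobiTheta₂_comap_im_atTop (-x)).comp hrot).congr' ?_
  filter_upwards [tendsto_comap.eventually_gt_atTop 0] with w hw
  exact (tsum_exp_shifted_gaussian hw x).symm

lemma tsum_int_eq_sum_range_tsum {G : Type*} [AddCommGroup G] [UniformSpace G]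
    [IsUniformAddGroup G] [CompleteSpace G] [T0Space G] {g : ℤ → G} (hg : Summable g)
    (N : ℕ) [NeZero N] :
    ∑' n, g n = ∑ j ∈ Finset.range N, ∑' m : ℤ, g (m * N + j) := by
  have hfib : Summable fun p : Fin N × ℤ ↦ g (p.2 * N + (p.1 : ℕ)) :=
    ((Equiv.prodComm _ _).trans (Int.divModEquiv N).symm).summable_iff.mpr hg
  rw [← Fin.sum_univ_eq_sum_range fun j ↦ ∑' m : ℤ, g (m * N + j),
    ← tsum_fintype (L := .unconditional _), ← hfib.tsum_prod]
  exact (((Equiv.prodComm _ _).trans (Int.divModEquiv N).symm).tsum_eq g).symm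

section PeriodicWeight

variable {R : Type*} [NormedRing R] {f g : ℤ → R} {N : ℕ} [NeZero N]

lemma norm_le_sum_range_of_periodic {E : Type*} [SeminormedAddCommGroup E] {f : ℤ → E}
    (hf : Periodic f N) (n : ℤ) : ‖f n‖ ≤ ∑ j ∈ Finset.range N, ‖f j‖ := by
  have hN : (0 : ℤ) < N := by exact_mod_cast NeZero.pos N
  have hlt := Int.emod_lt_of_pos n hN
  have hmod : f (n % N) = f n := by
    rw [Int.emod_def, mul_comm]
    exact hf.sub_int_mul_eq _
  rw [← hmod]
  lift n % N to ℕ using Int.emod_nonneg n hN.ne' with r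
  exact Finset.single_le_sum (f := fun j : ℕ ↦ ‖f j‖) (fun _ _ ↦ norm_nonneg _)
    (Finset.mem_range.mpr (by exact_mod_cast hlt))

variable [CompleteSpace R]

lemma summable_periodic_mul (hf : Periodic f N) (hg : Summable fun n ↦ ‖g n‖) :
    Summable fun n ↦ f n * g n :=
  .of_norm_bounded (hg.mul_left _) fun n ↦ (norm_mul_le _ _).trans <|
    mul_le_mul_of_nonneg_right (norm_le_sum_range_of_periodic hf n) (norm_nonneg _)

lemma tsum_periodic_mul (hf : Periodic f N) (hg : Summable fun n ↦ ‖g n‖) :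
    ∑' n, f n * g n = ∑ j ∈ Finset.range N, f j * ∑' m : ℤ, g (m * N + j) := by
  have hinj (j : ℕ) : Injective fun m : ℤ ↦ m * N + j :=
    (add_left_injective (j : ℤ)).comp (mul_left_injective₀ (NeZero.ne (N : ℤ)))
  have hfg := summable_periodic_mul hf hg
  rw [tsum_int_eq_sum_range_tsum hfg N]
  refine Finset.sum_congr rfl fun j _ ↦ ?_
  rw [← (hg.comp_injective (hinj j)).of_norm.tsum_mul_left]
  refine tsum_congr fun m ↦ ?_
  have hperiod : f (m * N + j) = f j := by
    rw [add_comm]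
    exact hf.int_mul m j
  rw [hperiod]

end PeriodicWeight

lemma tsum_periodic_mul_gaussian {f : ℤ → ℂ} {N : ℕ} [NeZero N] (hf : Periodic f N) {w : ℂ}
    (hw : 0 < w.re) (x : ℂ) :
    ∑' n : ℤ, f n * cexp (-π / (N ^ 2 * w) * (n + x) ^ 2) =
      ∑ j ∈ Finset.range N, f j * ∑' m : ℤ, cexp (-π / w * (m + (j + x) / N) ^ 2) := by
  have hN : (N : ℂ) ≠ 0 := NeZero.ne _
  have hNw : 0 < ((N : ℂ) ^ 2 * w).re := by
    rw [← ofReal_natCast, ← ofReal_pow, re_ofReal_mul]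
    have := NeZero.pos N
    positivity
  rw [tsum_periodic_mul hf (summable_exp_shifted_gaussian hNw x).norm]
  refine Finset.sum_congr rfl fun j _ ↦ congrArg _ (tsum_congr fun m ↦ congrArg cexp ?_)
  push_cast
  field_simp
  ring

lemma tendsto_tsum_periodic_mul_gaussian {f : ℤ → ℂ} {N : ℕ} [NeZero N] (hf : Periodic f N)
    (x : ℂ) :
    Tendsto (fun w ↦ 1 / w ^ (1 / 2 : ℂ) *
        ∑' n : ℤ, f n * cexp (-π / (N ^ 2 * w) * (n + x) ^ 2))
      (comap re atTop) (𝓝 (∑ j ∈ Finset.range N, f j)) := by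
  have hlim : Tendsto (fun w ↦ ∑ j ∈ Finset.range N, f j *
        (1 / w ^ (1 / 2 : ℂ) * ∑' m : ℤ, cexp (-π / w * (m + (j + x) / N) ^ 2)))
      (comap re atTop) (𝓝 (∑ j ∈ Finset.range N, f j * 1)) :=
    tendsto_finsetSum _ fun j _ ↦ (tendsto_tsum_exp_shifted_gaussian _).const_mul _
  simp_rw [mul_one, mul_left_comm (f _), ← Finset.mul_sum] at hlim
  refine hlim.congr' ?_
  filter_upwards [tendsto_comap.eventually_gt_atTop 0] with w hw
  rw [tsum_periodic_mul_gaussian hf hw]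

lemma ofReal_mul_cpow {r : ℝ} (hr : 0 ≤ r) (x s : ℂ) : (r * x) ^ s = r ^ s * x ^ s := by
  rcases eq_or_ne s 0 with rfl | hs
  · simp
  rcases hr.eq_or_lt with rfl | hr
  · simp [hs]
  rcases eq_or_ne x 0 with rfl | hx
  · simp [hs]
  have hr' : (r : ℂ) ≠ 0 := ofReal_ne_zero.mpr hr.ne'
  rw [cpow_def_of_ne_zero (mul_ne_zero hr' hx), cpow_def_of_ne_zero hr', cpow_def_of_ne_zero hx,
    log_ofReal_mul hr hx, ofReal_log hr.le, add_mul, Complex.exp_add]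

lemma ofReal_cpow_half {r : ℝ} (hr : 0 ≤ r) : (r : ℂ) ^ (1 / 2 : ℂ) = √r := by
  simp [Real.sqrt_eq_rpow, ofReal_cpow hr]

lemma neg_I_mul_cpow {w : ℂ} (hw : 0 < w.re) (s : ℂ) :
    (-I * w) ^ s = cexp (-(π * I / 2 * s)) * w ^ s := by
  have hw0 : w ≠ 0 := fun h ↦ by simp [h] at hw
  have harg := abs_lt.mp (abs_arg_lt_pi_div_two_iff.mpr (.inl hw))
  have hlog : log (-I * w) = log (-I) + log w := by
    refine log_mul (neg_ne_zero.mpr I_ne_zero) hw0 ?_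
    rw [arg_neg_I]
    constructor <;> linarith
  rw [cpow_def_of_ne_zero (mul_ne_zero (neg_ne_zero.mpr I_ne_zero) hw0), cpow_def_of_ne_zero hw0,
    hlog, log_neg_I, ← Complex.exp_add]
  congr 1
  ring

lemma one_div_cpow_half_mul_one_div_cpow_half {T r : ℝ} (hT : 0 ≤ T) (hr : 0 ≤ r) {w α : ℂ}
    (hw : 0 < w.re) (h : T * α = r * (-I * w)) :
    1 / (T : ℂ) ^ (1 / 2 : ℂ) * (1 / α ^ (1 / 2 : ℂ)) =
      1 / √r * cexp (π * I / 4) * (1 / w ^ (1 / 2 : ℂ)) := by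
  have hphase : π * I / 2 * (1 / 2) = π * I / 4 := by ring
  rw [one_div_mul_one_div, ← ofReal_mul_cpow hT, h, ofReal_mul_cpow hr, neg_I_mul_cpow hw,
    ofReal_cpow_half hr, hphase, Complex.exp_neg]
  simp only [one_div, mul_inv, inv_inv]
  ring

/-- The summand `exp(πi(an² + bn)/c)` of the generalized quadratic Gauss sum. -/
noncomputable def quadraticPhase (a b : ℤ) (c : ℕ) (n : ℤ) : ℂ :=
  cexp (π * I * (a * n ^ 2 + b * n) / c)

/-- The generalized quadratic Gauss sum `G(a, b, c) = ∑_{0 ≤ n < c} exp(πi(an² + bn)/c)`. With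
`πi` in place of `2πi`, the summand depends only on `n` modulo `c` when `ac + b` is even. -/
noncomputable def quadraticGaussSum (a b : ℤ) (c : ℕ) : ℂ :=
  ∑ n ∈ Finset.range c, quadraticPhase a b c n

lemma quadraticPhase_periodic {a b : ℤ} {c : ℕ} [NeZero c] (h : Even (a * c + b)) :
    Periodic (quadraticPhase a b c) c := by
  obtain ⟨m, hm⟩ := h
  have hb : (b : ℂ) = 2 * m - a * c := by
    have : (a : ℂ) * c + b = m + m := by exact_mod_cast hm
    linear_combination this
  have hc : (c : ℂ) ≠ 0 := NeZero.ne _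
  intro n
  refine exp_eq_exp_iff_exists_int.mpr ⟨a * n + m, ?_⟩
  push_cast
  rw [hb]
  field_simp
  ring

lemma quadraticPhase_mul_gaussian (a b : ℤ) (c : ℕ) (T : ℂ) (n : ℤ) :
    quadraticPhase a b c n * cexp (-π / (c ^ 2 * T) * n ^ 2) =
      cexp (-π * (1 / (c ^ 2 * T) - I * a / c) * n ^ 2 +
        2 * π * (I * b / (2 * c)) * n) := by
  rw [quadraticPhase, ← Complex.exp_add]
  congr 1
  ring

lemma quadraticPhase_mul_shifted_gaussian (a c : ℕ) [NeZero a] [NeZero c] (b : ℤ) (w : ℂ) (n : ℤ) :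
    cexp (-(π * I * b ^ 2 / (4 * a * c))) *
        (quadraticPhase (-c) b a n * cexp (-π / (a ^ 2 * w) * (n + -b / (2 * c)) ^ 2)) =
      cexp (-π * (1 / (a ^ 2 * w) + I * c / a) * (n + -b / (2 * c)) ^ 2) := by
  have ha : (a : ℂ) ≠ 0 := NeZero.ne _
  have hc : (c : ℂ) ≠ 0 := NeZero.ne _
  rw [quadraticPhase, ← Complex.exp_add, ← Complex.exp_add]
  congr 1
  push_cast
  field_simp
  ring

lemma re_ofReal_add_I_div (T : ℝ) (m : ℕ) : (T + I / m : ℂ).re = T := by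
  rw [add_re, ofReal_re, div_natCast_re, I_re, zero_div, add_zero]

/- The phase turns the Gaussian of width `c²T` into one with complex parameter
`α = 1/(c²T) - ia/c`. Since `1/α = 1/(a²w) + ic/a` with `w = T + i/(ac)`, its Poisson dual is again
a Gaussian times a quadratic phase, now of period `a`. -/

lemma re_one_div_sub_I_mul (a c : ℕ) (T : ℝ) :
    (1 / (c ^ 2 * T) - I * a / c : ℂ).re = 1 / (c ^ 2 * T) := by
  have hparts : (1 / (c ^ 2 * T) - I * a / c : ℂ) = (1 / (c ^ 2 * T) : ℝ) + (-a / c : ℝ) * I := by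
    push_cast
    ring
  rw [hparts, add_re, ofReal_re, mul_I_re, ofReal_im, neg_zero, add_zero]

lemma mul_one_div_sub_I_mul {a c T : ℂ} (ha : a ≠ 0) (hc : c ≠ 0) (hT : T ≠ 0) :
    T * (1 / (c ^ 2 * T) - I * a / c) = a / c * (-I * (T + I / (a * c))) := by
  field_simp
  linear_combination I_sq

lemma one_div_one_div_sub_I_mul {a c T : ℂ} (ha : a ≠ 0) (hc : c ≠ 0) (hT : T ≠ 0)
    (hw : T + I / (a * c) ≠ 0) :
    1 / (1 / (c ^ 2 * T) - I * a / c) = 1 / (a ^ 2 * (T + I / (a * c))) + I * c / a := by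
  have hα : 1 / (c ^ 2 * T) - I * a / c = a / c * (-I * (T + I / (a * c))) / T := by
    rw [eq_div_iff hT, mul_comm, mul_one_div_sub_I_mul ha hc hT]
  rw [hα, one_div_div, div_eq_iff (by simp [ha, hc, hw])]
  have hw' : T * a * c + I ≠ 0 := by
    contrapose! hw
    field_simp
    rw [hw, mul_zero]
  field_simp
  linear_combination (a * c * T + I) * I_sq

lemma tsum_quadraticPhase_mul_gaussian (a c : ℕ) [NeZero a] [NeZero c] (b : ℤ) {T : ℝ}
    (hT : 0 < T) :
    1 / (T : ℂ) ^ (1 / 2 : ℂ) *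
        ∑' n : ℤ, quadraticPhase a b c n * cexp (-π / (c ^ 2 * T) * n ^ 2) =
      √(c / a) * cexp (π * I / 4) * cexp (-(π * I * b ^ 2 / (4 * a * c))) *
        (1 / (T + I / (a * c : ℕ)) ^ (1 / 2 : ℂ) *
          ∑' n : ℤ, quadraticPhase (-c) b a n *
            cexp (-π / (a ^ 2 * (T + I / (a * c : ℕ))) * (n + -b / (2 * c)) ^ 2)) := by
  have ha : (a : ℂ) ≠ 0 := NeZero.ne _
  have hc : (c : ℂ) ≠ 0 := NeZero.ne _
  have hTne : (T : ℂ) ≠ 0 := ofReal_ne_zero.mpr hT.ne'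
  have hw : 0 < (T + I / (a * c : ℕ) : ℂ).re := by rwa [re_ofReal_add_I_div]
  have hwne : (T + I / (a * c) : ℂ) ≠ 0 := fun h ↦ by simp [h] at hw
  have hα : 0 < (1 / (c ^ 2 * T) - I * a / c : ℂ).re := by
    have := NeZero.pos c
    rw [re_one_div_sub_I_mul]
    positivity
  have hαw : T * (1 / (c ^ 2 * T) - I * a / c) =
      (a / c : ℝ) * (-I * (T + I / (a * c : ℕ))) := by
    push_cast
    exact mul_one_div_sub_I_mul ha hc hTne
  have hshift : I * (I * b / (2 * c)) = -b / (2 * c) := by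
    linear_combination (b / (2 * c) : ℂ) * I_sq
  have hroot : 1 / √(a / c : ℝ) = √(c / a : ℝ) := by
    rw [one_div, ← Real.sqrt_inv, inv_div]
  simp_rw [quadraticPhase_mul_gaussian, Int.cast_natCast]
  rw [Complex.tsum_exp_neg_quadratic hα, ← mul_assoc,
    one_div_cpow_half_mul_one_div_cpow_half hT.le (by positivity) hw hαw, hshift,
    div_eq_mul_one_div (-π : ℂ), one_div_one_div_sub_I_mul ha hc hTne hwne]
  rw [← hroot]
  push_cast
  simp_rw [← quadraticPhase_mul_shifted_gaussian, tsum_mul_left]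
  ring

lemma quadraticGaussSum_reciprocity (a c : ℕ) [NeZero a] [NeZero c] {b : ℤ}
    (h : Even (a * c + b)) :
    quadraticGaussSum a b c =
      √(c / a) * cexp (π * I / 4) * cexp (-(π * I * b ^ 2 / (4 * a * c))) *
        quadraticGaussSum (-c) b a := by
  have hdual : Even (-c * a + b) := by
    have : (-c * a + b : ℤ) = a * c + b - 2 * (a * c) := by ring
    rw [this]
    exact h.sub (even_two_mul _)
  have hre : Tendsto (fun T : ℝ ↦ (T : ℂ)) atTop (comap re atTop) :=
    tendsto_comap_iff.mpr tendsto_id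
  have hreI : Tendsto (fun T : ℝ ↦ (T + I / (a * c : ℕ) : ℂ)) atTop (comap re atTop) :=
    tendsto_comap_iff.mpr (tendsto_id.congr fun T ↦ (re_ofReal_add_I_div T (a * c)).symm)
  have hlim := (tendsto_tsum_periodic_mul_gaussian (quadraticPhase_periodic h) 0).comp hre
  have hlimDual := ((tendsto_tsum_periodic_mul_gaussian (quadraticPhase_periodic hdual)
    (-b / (2 * c))).comp hreI).const_mul
      (√(c / a) * cexp (π * I / 4) * cexp (-(π * I * b ^ 2 / (4 * a * c))))
  refine tendsto_nhds_unique (hlim.congr' ?_) hlimDual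
  filter_upwards [eventually_gt_atTop 0] with T hT
  simpa only [comp_apply, add_zero] using tsum_quadraticPhase_mul_gaussian a c b hT

lemma quadraticGaussSum_two (a b : ℤ) : quadraticGaussSum a b 2 = 1 + I ^ (a + b) := by
  have hzero : quadraticPhase a b 2 (0 : ℕ) = 1 := by simp [quadraticPhase]
  have hone : quadraticPhase a b 2 (1 : ℕ) = I ^ (a + b) := by
    conv_rhs => rw [← exp_pi_div_two_mul_I, ← exp_int_mul]
    refine congrArg cexp ?_
    push_cast
    ring
  rw [quadraticGaussSum, Finset.sum_range_succ, Finset.sum_range_one, hzero, hone]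

lemma neg_I_zpow_two_mul_add (k m : ℤ) : (-I) ^ (2 * k + m) = I ^ (2 * k - m) := by
  have hexp : 2 * k - m = -(2 * k + m) + 4 * k := by ring
  have hfour : I ^ (4 : ℤ) = 1 := I_pow_four
  rw [hexp, zpow_add₀ I_ne_zero, zpow_mul, hfour, one_zpow, mul_one, ← inv_I, inv_zpow']

theorem gauss_sum_odd_general (D : ℕ) (hD : 0 < D) (k : ℤ) :
    ∑ j ∈ Finset.range D, cexp (2 * π * I * (j ^ 2 + k * j) / D) =
      √D * cexp (π * I / 4) * cexp (-(π * I * k ^ 2 / (2 * D))) *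
        ((1 + (-I) ^ (2 * k + D)) / √2) := by
  have : NeZero D := ⟨hD.ne'⟩
  have hsum : quadraticGaussSum (2 : ℕ) (2 * k) D =
      ∑ j ∈ Finset.range D, cexp (2 * π * I * (j ^ 2 + k * j) / D) := by
    refine Finset.sum_congr rfl fun j _ ↦ congrArg cexp ?_
    push_cast
    ring
  have hdual : quadraticGaussSum (-D) (2 * k) 2 = 1 + (-I) ^ (2 * k + D) := by
    rw [quadraticGaussSum_two, neg_I_zpow_two_mul_add, neg_add_eq_sub]
  have hexp : π * I * (2 * k : ℤ) ^ 2 / (4 * (2 : ℕ) * D) =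
      π * I * k ^ 2 / (2 * D) := by
    push_cast
    field_simp
    ring
  rw [← hsum, quadraticGaussSum_reciprocity 2 D (by grind), hdual, hexp]
  rw [Real.sqrt_div D.cast_nonneg]
  push_cast
  ring

/-- Evaluation of the generalized quadratic Gauss sum for odd `D`:
`∑_{j=0}^{D−1} exp(2πi(j² + kj)/D)
  = √D · e^{πi/4} · e^{−πik²/(2D)} · (1 − i^{2k+D})/√2`. -/
theorem gauss_sum_odd (D : ℕ) (hD : 0 < D) (hOdd : Odd D) (k : ℕ) :
    ∑ j ∈ Finset.range D,
        Complex.exp (2 * (Real.pi : ℂ) * Complex.I * ((j : ℂ) ^ 2 + (k : ℂ) * (j : ℂ)) / (D : ℂ)) =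
      (Real.sqrt D : ℂ) * Complex.exp ((Real.pi : ℂ) * Complex.I / 4) *
        Complex.exp (-((Real.pi : ℂ) * Complex.I * (k : ℂ) ^ 2 / (2 * (D : ℂ)))) *
        ((1 - Complex.I ^ (2 * k + D)) / (Real.sqrt 2 : ℂ)) := by
  have hexp : Odd (2 * k + D) := (even_two_mul k).add_odd hOdd
  rw [sub_eq_add_neg, ← hexp.neg_pow]
  exact_mod_cast gauss_sum_odd_general D hD k
end
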